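/- arXiv:2405.04703 — 3 statements merged into one kernel-verified Lean document; each statement's English description precedes it below -/
import Mathlib

section
/- Let G be a graph of diameter 2 on n vertices. Then G is Bonnet-Myers sharp if and only if G can be obtained from the complete graph K_n by deleting a matching (a set of pairwise disjoint edges). -/
open scoped Classical
open Finset

noncomputable section

/-- The degree of a vertex `x` in the graph `G`. -/
def deg {V : Type*} [Fintype V] (G : SimpleGraph V) (x : V) : ℕ :=
  (Finset.univ.filter (fun y => G.Adj x y)).card

/-- The diameter of `G`: the maximum of the combinatorial distance over all pairs of vertices. -/
def diam {V : Type*} [Fintype V] (G : SimpleGraph V) : ℕ :=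
  Finset.univ.sup (fun xy : V × V => G.dist xy.1 xy.2)

/-- The probability measure `μ_x^p` of the lazy simple random walk at `x` with idleness `p`. -/
def mu {V : Type*} [Fintype V] (G : SimpleGraph V) (p : ℝ) (x : V) : V → ℝ :=
  fun z => if z = x then p else if G.Adj x z then (1 - p) / (deg G x : ℝ) else 0

/-- The Wasserstein distance `W₁(μ₁, μ₂)` with respect to the combinatorial distance of `G`:
the infimum of the total transport cost over all transport plans from `μ₁` to `μ₂`. -/
def W1 {V : Type*} [Fintype V] (G : SimpleGraph V) (μ₁ μ₂ : V → ℝ) : ℝ :=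
  sInf {c : ℝ | ∃ π : V → V → ℝ,
    (∀ x y, 0 ≤ π x y ∧ π x y ≤ 1) ∧
    (∀ x, ∑ y, π x y = μ₁ x) ∧
    (∀ y, ∑ x, π x y = μ₂ y) ∧
    c = ∑ x, ∑ y, (G.dist x y : ℝ) * π x y}

/-- The `p`-Ollivier-Ricci curvature `κ_p(x,y) = 1 - W₁(μ_x^p, μ_y^p)`. -/
def kappa {V : Type*} [Fintype V] (G : SimpleGraph V) (p : ℝ) (x y : V) : ℝ :=
  1 - W1 G (mu G p x) (mu G p y)

/-- The Lin-Lu-Yau curvature `κ_LLY(x,y) = lim_{p→1} κ_p(x,y)/(1-p)`. -/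
def kappaLLY {V : Type*} [Fintype V] (G : SimpleGraph V) (x y : V) : ℝ :=
  Filter.limUnder (nhdsWithin 1 (Set.Iio 1)) (fun p => kappa G p x y / (1 - p))

/-- `G` is Bonnet-Myers sharp if the infimum of `κ_LLY` over the edges equals `2/diam(G)`. -/
def BMSharp {V : Type*} [Fintype V] (G : SimpleGraph V) : Prop :=
  sInf {r : ℝ | ∃ x y, G.Adj x y ∧ r = kappaLLY G x y} = 2 / (diam G : ℝ)

/-- `G` is obtained from the complete graph on its vertex set by deleting a matching
(a set of pairwise disjoint edges, encoded as a symmetric irreflexive relation in which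
every vertex has at most one partner). -/
def IsMatchingDeletionOfComplete {V : Type*} (G : SimpleGraph V) : Prop :=
  ∃ M : V → V → Prop, Symmetric M ∧ (∀ x, ¬ M x x) ∧
    (∀ x y z, M x y → M x z → y = z) ∧
    (∀ x y, G.Adj x y ↔ x ≠ y ∧ ¬ M x y)

/-- The graph `G(a,b)` on `2a+b` vertices `u_1, …, u_{2a}, v_1, …, v_b` (encoded as
`Fin (2a+b)`, with `u_i` the index `i-1` and `v_j` the index `2a+j-1`), in which two distinct
vertices are adjacent unless they form a pair `{u_{2i-1}, u_{2i}}`, i.e. `G(a,b)` is the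
complete graph `K_{2a+b}` with a matching of size `a` deleted. -/
def Gab (a b : ℕ) : SimpleGraph (Fin (2*a+b)) where
  Adj x y := x ≠ y ∧ ¬((x : ℕ) < 2*a ∧ (y : ℕ) < 2*a ∧ (x : ℕ)/2 = (y : ℕ)/2)
  symm := by
    constructor
    intro x y h
    exact ⟨h.1.symm, fun hc => h.2 ⟨hc.2.1, hc.1, hc.2.2.symm⟩⟩
  loopless := by constructor; intro x h; exact h.1 rfl

/-- The antitree `AT(a_1, …, a_N)` on the disjoint union of sets `V_1, …, V_N` with
`|V_k| = a_k` (0-indexed here: `V_k` is `Fin (a k)` for `k : Fin N`): two distinct vertices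
are adjacent iff they lie in the same set or in consecutive sets. -/
def antitree (N : ℕ) (a : Fin N → ℕ) : SimpleGraph (Σ k : Fin N, Fin (a k)) where
  Adj x y := x ≠ y ∧
    ((x.1 : ℕ) = (y.1 : ℕ) ∨ (x.1 : ℕ) + 1 = (y.1 : ℕ) ∨ (y.1 : ℕ) + 1 = (x.1 : ℕ))
  symm := by
    constructor
    intro x y h
    refine ⟨h.1.symm, ?_⟩
    rcases h.2 with h2 | h2 | h2
    · exact Or.inl h2.symm
    · exact Or.inr (Or.inr h2)
    · exact Or.inr (Or.inl h2)
  loopless := by constructor; intro x h; exact h.1 rfl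

def IsPlan {V : Type*} [Fintype V] (μ₁ μ₂ : V → ℝ) (π : V → V → ℝ) : Prop :=
    (∀ x y, 0 ≤ π x y ∧ π x y ≤ 1) ∧
    (∀ x, ∑ y, π x y = μ₁ x) ∧
    (∀ y, ∑ x, π x y = μ₂ y)

def cost {V : Type*} [Fintype V] (G : SimpleGraph V) (π : V → V → ℝ) : ℝ :=
  ∑ x, ∑ y, (G.dist x y : ℝ) * π x y

lemma W1_le {V : Type*} [Fintype V] (G : SimpleGraph V) {μ ν : V → ℝ} {π : V → V → ℝ}
    (h : IsPlan μ ν π) : W1 G μ ν ≤ cost G π := by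
  apply csInf_le
  · refine ⟨0, ?_⟩
    rintro c ⟨π, h1, -, -, rfl⟩
    exact Finset.sum_nonneg fun x _ => Finset.sum_nonneg fun y _ =>
      mul_nonneg (Nat.cast_nonneg _) (h1 x y).1
  · exact ⟨π, h.1, h.2.1, h.2.2, rfl⟩

lemma le_W1 {V : Type*} [Fintype V] (G : SimpleGraph V) {μ ν : V → ℝ} {b : ℝ}
    (hμ : ∀ u, 0 ≤ μ u) (hν : ∀ u, 0 ≤ ν u) (sμ : ∑ u, μ u = 1) (sν : ∑ u, ν u = 1)
    (h : ∀ π, IsPlan μ ν π → b ≤ cost G π) : b ≤ W1 G μ ν := by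
  apply le_csInf
  · have a1 : ∀ u, μ u ≤ 1 := fun u => by
      rw [← sμ]; exact Finset.single_le_sum (f := μ) (fun i _ => hμ i) (Finset.mem_univ u)
    have a2 : ∀ u, ν u ≤ 1 := fun u => by
      rw [← sν]; exact Finset.single_le_sum (f := ν) (fun i _ => hν i) (Finset.mem_univ u)
    refine ⟨_, fun u v => μ u * ν v, ?_, ?_, ?_, rfl⟩
    · exact fun u v => ⟨mul_nonneg (hμ u) (hν v), mul_le_one₀ (a1 u) (hν v) (a2 v)⟩
    · intro u; rw [← Finset.mul_sum, sν, mul_one]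
    · intro u; rw [← Finset.sum_mul, sμ, one_mul]
  · rintro c ⟨π, h1, h2, h3, rfl⟩
    exact h π ⟨h1, h2, h3⟩

lemma sum_mul_mu {V : Type*} [Fintype V] (G : SimpleGraph V) (p : ℝ) (x : V) (f : V → ℝ) :
    ∑ z, f z * mu G p x z = p * f x +
      (1 - p) * ((∑ z ∈ Finset.univ.filter (fun y => G.Adj x y), f z) / (deg G x : ℝ)) := by
  have h : ∀ z, f z * mu G p x z = (if z = x then p * f x else 0) +
      (if G.Adj x z then f z * ((1 - p) / (deg G x : ℝ)) else 0) := by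
    intro z
    unfold mu
    by_cases hz : z = x
    · subst hz; simp [mul_comm]
    · simp [hz]
  rw [Finset.sum_congr rfl (fun z _ => h z), Finset.sum_add_distrib, ← Finset.sum_filter,
    ← Finset.sum_filter]
  have e : ∑ a ∈ Finset.univ.filter (fun a => a = x), p * f x = p * f x := by
    rw [Finset.sum_filter]; simp
  rw [e, ← Finset.sum_mul]
  ring

lemma deg_pos' {V : Type*} [Fintype V] (G : SimpleGraph V) {x y : V} (h : G.Adj x y) :
    0 < (deg G x : ℝ) := by
  unfold deg
  exact_mod_cast Finset.card_pos.2 ⟨y, by simp [h]⟩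

lemma sum_mu {V : Type*} [Fintype V] (G : SimpleGraph V) (p : ℝ) {x y : V} (h : G.Adj x y) :
    ∑ z, mu G p x z = 1 := by
  have := sum_mul_mu G p x (fun _ => 1)
  have hd := deg_pos' G h
  simp only [one_mul, Finset.sum_const, nsmul_eq_mul, mul_one] at this
  rw [this]
  change p + (1 - p) * ((deg G x : ℝ) / deg G x) = 1
  rw [div_self hd.ne']; ring

lemma mu_nonneg {V : Type*} [Fintype V] (G : SimpleGraph V) {p : ℝ} (h0 : 0 ≤ p) (h1 : p ≤ 1)
    (x z : V) : 0 ≤ mu G p x z := by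
  unfold mu
  split_ifs
  · exact h0
  · exact div_nonneg (by linarith) (Nat.cast_nonneg _)
  · exact le_rfl

lemma W1_symm {V : Type*} [Fintype V] (G : SimpleGraph V) (μ ν : V → ℝ) :
    W1 G μ ν = W1 G ν μ := by
  unfold W1
  congr 1
  ext c
  constructor
  · rintro ⟨π, h1, h2, h3, rfl⟩
    refine ⟨fun u v => π v u, fun u v => h1 v u, h3, h2, ?_⟩
    rw [Finset.sum_comm]
    simp only [G.dist_comm]
  · rintro ⟨π, h1, h2, h3, rfl⟩
    refine ⟨fun u v => π v u, fun u v => h1 v u, h3, h2, ?_⟩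
    rw [Finset.sum_comm]
    simp only [G.dist_comm]

lemma kappaLLY_symm {V : Type*} [Fintype V] (G : SimpleGraph V) (x y : V) :
    kappaLLY G x y = kappaLLY G y x := by
  unfold kappaLLY kappa
  simp only [W1_symm G (mu G _ x)]

lemma plan_dual {V : Type*} [Fintype V] (G : SimpleGraph V) {μ ν : V → ℝ} {π : V → V → ℝ}
    (h : IsPlan μ ν π) (f : V → ℝ) (hf : ∀ u v, f v - f u ≤ G.dist u v) :
    ∑ z, f z * ν z - ∑ z, f z * μ z ≤ cost G π := by
  have e1 : ∑ z, f z * ν z = ∑ u, ∑ v, f v * π u v := by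
    rw [Finset.sum_comm]
    refine Finset.sum_congr rfl fun v _ => ?_
    rw [← h.2.2 v, Finset.mul_sum]
  have e2 : ∑ z, f z * μ z = ∑ u, ∑ v, f u * π u v := by
    refine Finset.sum_congr rfl fun v _ => ?_
    rw [← h.2.1 v, Finset.mul_sum]
  rw [e1, e2, ← Finset.sum_sub_distrib]
  refine Finset.sum_le_sum fun u _ => ?_
  rw [← Finset.sum_sub_distrib]
  refine Finset.sum_le_sum fun v _ => ?_
  rw [← sub_mul]
  exact mul_le_mul_of_nonneg_right (hf u v) (h.1 u v).1

def avg {V : Type*} [Fintype V] (G : SimpleGraph V) (f : V → ℝ) (x : V) : ℝ :=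
  (∑ z ∈ Finset.univ.filter (fun y => G.Adj x y), f z) / (deg G x : ℝ)

lemma kappa_le {V : Type*} [Fintype V] (G : SimpleGraph V) {x y : V} (hxy : G.Adj x y)
    (f : V → ℝ) (hf : ∀ u v, f v - f u ≤ G.dist u v) (h1 : f y - f x = 1)
    {p : ℝ} (hp0 : 0 ≤ p) (hp1 : p < 1) :
    kappa G p x y / (1 - p) ≤ 1 - avg G f y + avg G f x := by
  rw [div_le_iff₀ (by linarith)]
  have : 1 - (1 - avg G f y + avg G f x) * (1 - p) ≤ W1 G (mu G p x) (mu G p y) := by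
    refine le_W1 G (mu_nonneg G hp0 hp1.le x) (mu_nonneg G hp0 hp1.le y) (sum_mu G p hxy)
      (sum_mu G p hxy.symm) fun π hπ => ?_
    have := plan_dual G hπ f hf
    rw [sum_mul_mu, sum_mul_mu] at this
    change p * f y + (1 - p) * avg G f y - (p * f x + (1 - p) * avg G f x) ≤ _ at this
    have e : f y = 1 + f x := by linarith
    rw [e] at this
    linarith
  unfold kappa
  linarith

lemma kappa_mono {V : Type*} [Fintype V] (G : SimpleGraph V) {x y : V} (hxy : G.Adj x y) :
    MonotoneOn (fun p => kappa G p x y / (1 - p)) (Set.Ico 0 1) := by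
  rintro p ⟨hp0, hp1⟩ q ⟨hq0, hq1⟩ hpq
  have hp : 0 < 1 - p := by linarith
  have hq : 0 < 1 - q := by linarith
  obtain ⟨t, ht⟩ : ∃ t, t = (1 - q) / (1 - p) := ⟨_, rfl⟩
  have ht0 : 0 < t := by rw [ht]; positivity
  have ht1 : t ≤ 1 := by rw [ht, div_le_one hp]; linarith
  have htp : t * (1 - p) = 1 - q := by rw [ht]; field_simp
  have key : (W1 G (mu G q x) (mu G q y) - (1 - t)) / t ≤ W1 G (mu G p x) (mu G p y) := by
    refine le_W1 G (mu_nonneg G hp0 hp1.le x) (mu_nonneg G hp0 hp1.le y) (sum_mu G p hxy)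
      (sum_mu G p hxy.symm) fun π hπ => ?_
    rw [div_le_iff₀ ht0]
    have hmu : ∀ w u, t * mu G p w u + (1 - t) * (if u = w then 1 else 0) = mu G q w u := by
      intro w u
      unfold mu
      split_ifs
      · linarith
      · rw [← htp]; ring
      · ring
    have hpl : IsPlan (mu G q x) (mu G q y)
        (fun u v => t * π u v + (1 - t) * (if u = x then (if v = y then 1 else 0) else 0)) := by
      refine ⟨fun u v => ?_, fun u => ?_, fun v => ?_⟩
      · have := hπ.1 u v
        have a1 : 0 ≤ t * π u v := mul_nonneg ht0.le this.1
        have a2 : t * π u v ≤ t := mul_le_of_le_one_right ht0.le this.2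
        dsimp only
        split_ifs <;> constructor <;> linarith
      · rw [Finset.sum_add_distrib, ← Finset.mul_sum, ← Finset.mul_sum, hπ.2.1, ← hmu]
        split_ifs <;> simp
      · rw [Finset.sum_add_distrib, ← Finset.mul_sum, ← Finset.mul_sum, hπ.2.2, ← hmu]
        simp
    have h2 := W1_le G hpl
    have h3 : cost G (fun u v => t * π u v +
        (1 - t) * (if u = x then (if v = y then 1 else 0) else 0)) = cost G π * t + (1 - t) := by
      unfold cost
      have hd : (G.dist x y : ℝ) = 1 := by
        rw [SimpleGraph.dist_eq_one_iff_adj.2 hxy]; simp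
      have : ∀ u v, (G.dist u v : ℝ) * (t * π u v +
        (1 - t) * (if u = x then (if v = y then 1 else 0) else 0)) =
        (G.dist u v : ℝ) * π u v * t +
          (if u = x then (if v = y then (1 - t) else 0) else 0) := by
        intro u v
        split_ifs with h h'
        · subst h h'; rw [hd]; ring
        · ring
        · ring
      simp only [this, Finset.sum_add_distrib, ← Finset.sum_mul]
      simp
    linarith
  rw [div_le_iff₀ ht0] at key
  change kappa G p x y / (1 - p) ≤ kappa G q x y / (1 - q)
  rw [le_div_iff₀ hq, ← htp]
  have : kappa G p x y / (1 - p) * (t * (1 - p)) = t * kappa G p x y := by field_simp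
  rw [this]
  unfold kappa
  linarith

lemma dist_lip {V : Type*} [Fintype V] (G : SimpleGraph V) (hconn : G.Connected) (x : V) :
    ∀ u v, (G.dist x v : ℝ) - G.dist x u ≤ G.dist u v := by
  intro u v
  have : G.dist x v ≤ G.dist x u + G.dist u v := hconn.dist_triangle
  have : (G.dist x v : ℝ) ≤ G.dist x u + G.dist u v := by exact_mod_cast this
  linarith

lemma kappa_tendsto {V : Type*} [Fintype V] (G : SimpleGraph V) (hconn : G.Connected)
    {x y : V} (hxy : G.Adj x y) :
    Filter.Tendsto (fun p => kappa G p x y / (1 - p)) (nhdsWithin 1 (Set.Iio 1))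
      (nhds (kappaLLY G x y)) := by
  have hd : (G.dist x y : ℝ) = 1 := by
    rw [SimpleGraph.dist_eq_one_iff_adj.2 hxy]; simp
  have hb : BddAbove ((fun p => kappa G p x y / (1 - p)) '' Set.Ioo 0 1) := by
    refine ⟨1 - avg G (fun z => (G.dist x z : ℝ)) y + avg G (fun z => (G.dist x z : ℝ)) x, ?_⟩
    rintro _ ⟨p, hp, rfl⟩
    exact kappa_le G hxy _ (dist_lip G hconn x) (by simp [hd]) hp.1.le hp.2
  have hm := (kappa_mono G hxy).mono Set.Ioo_subset_Ico_self
  have := hm.tendsto_nhdsWithin_Ioo_left (by norm_num : (Set.Ioo (0:ℝ) 1).Nonempty) hb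
  have h2 := this.limUnder_eq
  unfold kappaLLY
  rw [h2]; exact this

lemma Ico_mem : Set.Ico (0:ℝ) 1 ∈ nhdsWithin 1 (Set.Iio 1) :=
  Ico_mem_nhdsLT (by norm_num)

lemma LLY_le {V : Type*} [Fintype V] (G : SimpleGraph V) (hconn : G.Connected)
    {x y : V} (hxy : G.Adj x y)
    (f : V → ℝ) (hf : ∀ u v, f v - f u ≤ G.dist u v) (h1 : f y - f x = 1) :
    kappaLLY G x y ≤ 1 - avg G f y + avg G f x := by
  refine le_of_tendsto (kappa_tendsto G hconn hxy) ?_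
  filter_upwards [Ico_mem] with p hp
  exact kappa_le G hxy f hf h1 hp.1 hp.2

lemma le_LLY {V : Type*} [Fintype V] (G : SimpleGraph V) (hconn : G.Connected)
    {x y : V} (hxy : G.Adj x y) {p : ℝ} (hp0 : 0 ≤ p) (hp1 : p < 1) :
    kappa G p x y / (1 - p) ≤ kappaLLY G x y := by
  refine ge_of_tendsto (kappa_tendsto G hconn hxy) ?_
  filter_upwards [Ico_mem_nhdsLT hp1] with q hq
  exact kappa_mono G hxy ⟨hp0, hp1⟩ ⟨hp0.trans hq.1, hq.2⟩ hq.1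

lemma W1_le_star {V : Type*} [Fintype V] (G : SimpleGraph V) {μ ν : V → ℝ} (s : V)
    (hμ : ∀ u, 0 ≤ μ u) (hν : ∀ u, 0 ≤ ν u) (sμ : ∑ u, μ u = 1) (sν : ∑ u, ν u = 1)
    (h : ∀ v, v ≠ s → μ v ≤ ν v) (hd : ∀ v, v ≠ s → μ v < ν v → G.dist s v ≤ 1) :
    W1 G μ ν ≤ μ s := by
  have hsum : ∑ v, (if v = s then 0 else ν v - μ v) = μ s - ν s := by
    have : ∀ v, (if v = s then 0 else ν v - μ v) = (ν v - μ v) + if v = s then μ s - ν s else 0 := by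
      intro v
      split_ifs with h
      · subst h; ring
      · ring
    simp only [this, Finset.sum_add_distrib, Finset.sum_sub_distrib, sμ, sν]
    simp
  set π : V → V → ℝ := fun u v => (if u = v then (if u = s then ν s else μ u) else 0) +
    (if u = s then (if v = s then 0 else ν v - μ v) else 0) with hπ
  have hnn : ∀ u v, 0 ≤ π u v := by
    intro u v
    apply add_nonneg
    · split_ifs <;> simp [hμ, hν]
    · split_ifs with h1 h2
      · exact le_rfl
      · linarith [h v h2]
      · exact le_rfl
  have hrow : ∀ u, ∑ v, π u v = μ u := by
    intro u
    simp only [hπ, Finset.sum_add_distrib]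
    by_cases hu : u = s
    · subst hu; simp only [if_true, hsum]; simp
    · simp [hu]
  have hcol : ∀ v, ∑ u, π u v = ν v := by
    intro v
    simp only [hπ, Finset.sum_add_distrib]
    by_cases hu : v = s
    · subst hu; simp
    · simp [hu]
  have hpl : IsPlan μ ν π := by
    refine ⟨fun u v => ⟨hnn u v, ?_⟩, hrow, hcol⟩
    have a1 : π u v ≤ μ u := by
      rw [← hrow]; exact Finset.single_le_sum (f := π u) (fun i _ => hnn u i) (Finset.mem_univ v)
    have a2 : μ u ≤ 1 := by
      rw [← sμ]; exact Finset.single_le_sum (f := μ) (fun i _ => hμ i) (Finset.mem_univ u)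
    linarith
  refine (W1_le G hpl).trans ?_
  have hle : cost G π ≤ ∑ u, ∑ v, (if u = s then (if v = s then 0 else ν v - μ v) else 0) := by
    refine Finset.sum_le_sum fun u _ => Finset.sum_le_sum fun v _ => ?_
    simp only [hπ]
    by_cases huv : u = v
    · subst huv
      simp only [SimpleGraph.dist_self, Nat.cast_zero, zero_mul]
      split_ifs <;> simp
    · by_cases hu : u = s
      · subst hu
        have hv : v ≠ u := fun e => huv e.symm
        simp only [huv, hv, if_true, if_false, zero_add]
        rcases (h v hv).lt_or_eq with hlt | heq
        · have : (G.dist u v : ℝ) ≤ 1 := by exact_mod_cast hd v hv hlt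
          exact mul_le_of_le_one_left (by linarith) this
        · rw [heq]; simp
      · simp [hu, huv]
  refine hle.trans ?_
  rw [Finset.sum_comm]
  simp only [Finset.sum_ite_eq', Finset.mem_univ, if_true, hsum]
  linarith [hν s]

lemma le_LLY_of {V : Type*} [Fintype V] (G : SimpleGraph V) (hconn : G.Connected)
    (hM : ∀ x y z, x ≠ y → ¬ G.Adj x y → x ≠ z → ¬ G.Adj x z → y = z)
    {x y : V} (hxy : G.Adj x y) (hdeg : deg G y ≤ deg G x) : 1 ≤ kappaLLY G x y := by
  have hx := deg_pos' G hxy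
  have hy := deg_pos' G hxy.symm
  have hdeg' : (deg G y : ℝ) ≤ deg G x := by exact_mod_cast hdeg
  obtain ⟨p, hp⟩ : ∃ p : ℝ, p = 1 / (deg G x + 1) := ⟨_, rfl⟩
  have hp0 : 0 < p := by rw [hp]; positivity
  have hp1 : p < 1 := by rw [hp, div_lt_one (by linarith)]; linarith
  have hpx : (1 - p) / (deg G x : ℝ) = p := by rw [hp]; field_simp; ring
  have hpy : p ≤ (1 - p) / (deg G y : ℝ) := by
    rw [← hpx]
    have : 0 ≤ 1 - p := by linarith
    rw [hpx]
    calc p = (1 - p) / (deg G x : ℝ) := hpx.symm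
      _ ≤ _ := by gcongr
  have hmx : ∀ v, mu G p x v ≤ p := by
    intro v; unfold mu; rw [hpx]
    split_ifs <;> linarith
  refine le_trans ?_ (le_LLY G hconn hxy hp0.le hp1)
  rw [le_div_iff₀ (by linarith)]
  have : W1 G (mu G p x) (mu G p y) ≤ p := by
    obtain ⟨s, hs1, hs2⟩ : ∃ s, (∀ v, v ≠ s → v = y ∨ G.Adj y v) ∧
        (∀ v, v ≠ s → v ≠ y → G.Adj s v) := by
      by_cases hfull : ∃ y', y ≠ y' ∧ ¬ G.Adj y y'
      · obtain ⟨y', h1, h2⟩ := hfull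
        refine ⟨y', fun v hv => ?_, fun v hv hvy => ?_⟩
        · by_contra! hc
          exact hv (hM y v y' hc.1.symm hc.2 h1 h2)
        · by_contra hc
          exact hvy (hM y' v y hv.symm hc h1.symm (fun h => h2 h.symm))
      · push Not at hfull
        exact ⟨y, fun v hv => Or.inr (hfull v hv.symm), fun v hv _ => hfull v hv.symm⟩
    refine (W1_le_star G s (mu_nonneg G hp0.le hp1.le x) (mu_nonneg G hp0.le hp1.le y)
      (sum_mu G p hxy) (sum_mu G p hxy.symm) (fun v hv => ?_) (fun v hv hlt => ?_)).trans (hmx s)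
    · refine (hmx v).trans ?_
      unfold mu
      rcases hs1 v hv with rfl | h
      · simp
      · simp [h, h.ne', hpy]
    · rw [SimpleGraph.dist_eq_one_iff_adj.2]
      apply hs2 v hv
      rintro rfl
      have : mu G p x v = p := by
        unfold mu; rw [if_neg hxy.ne', if_pos hxy, hpx]
      rw [this] at hlt
      unfold mu at hlt
      simp at hlt
  unfold kappa
  linarith

lemma one_le_LLY {V : Type*} [Fintype V] (G : SimpleGraph V) (hconn : G.Connected)
    (hM : ∀ x y z, x ≠ y → ¬ G.Adj x y → x ≠ z → ¬ G.Adj x z → y = z)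
    {x y : V} (hxy : G.Adj x y) : 1 ≤ kappaLLY G x y := by
  rcases le_total (deg G y) (deg G x) with h | h
  · exact le_LLY_of G hconn hM hxy h
  · rw [kappaLLY_symm]; exact le_LLY_of G hconn hM hxy.symm h

lemma exists_common {V : Type*} [Fintype V] (G : SimpleGraph V) (hconn : G.Connected)
    {x z : V} (h : G.dist x z = 2) : ∃ y, G.Adj x y ∧ G.Adj y z := by
  obtain ⟨w, hw⟩ := hconn.exists_walk_length_eq_dist x z
  rw [h] at hw
  cases w with
  | nil => simp at hw
  | cons h1 w =>
    cases w with
    | nil => simp at hw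
    | cons h2 w =>
      cases w with
      | nil => exact ⟨_, h1, h2⟩
      | cons h3 w => simp at hw

lemma avg_self {V : Type*} [Fintype V] (G : SimpleGraph V) {x y : V} (hxy : G.Adj x y) :
    avg G (fun w => (G.dist x w : ℝ)) x = 1 := by
  unfold avg
  rw [div_eq_one_iff_eq (deg_pos' G hxy).ne']
  have : ∀ w ∈ Finset.univ.filter (fun y => G.Adj x y), (G.dist x w : ℝ) = 1 := by
    intro w hw
    rw [SimpleGraph.dist_eq_one_iff_adj.2 (by simpa using hw)]; simp
  rw [Finset.sum_congr rfl this]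
  simp [deg]

lemma avg_sub {V : Type*} [Fintype V] (G : SimpleGraph V) {y z : V} (hyz : G.Adj y z)
    (f : V → ℝ) : avg G f y = 1 +
      (∑ w ∈ Finset.univ.filter (fun w => G.Adj y w), (f w - 1)) / (deg G y : ℝ) := by
  have := deg_pos' G hyz
  rw [Finset.sum_sub_distrib]
  unfold avg
  have e : ∑ w ∈ Finset.univ.filter (fun w => G.Adj y w), (1:ℝ) = deg G y := by simp [deg]
  rw [e]; field_simp; ring

lemma dist_edge_le {V : Type*} [Fintype V] (G : SimpleGraph V) (hconn : G.Connected)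
    {x y : V} (hxy : G.Adj x y) :
    kappaLLY G x y ≤ 2 - avg G (fun w => (G.dist x w : ℝ)) y := by
  have hd : (G.dist x y : ℝ) = 1 := by
    rw [SimpleGraph.dist_eq_one_iff_adj.2 hxy]; simp
  have := LLY_le G hconn hxy (fun w => (G.dist x w : ℝ)) (dist_lip G hconn x) (by simp [hd])
  rw [avg_self G hxy] at this
  linarith

lemma sum_ge {V : Type*} [Fintype V] (G : SimpleGraph V) (hconn : G.Connected)
    {x y : V} (hxy : G.Adj x y) (T : Finset V) (hT : ∀ z ∈ T, G.Adj y z ∧ G.dist x z = 2) :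
    (T.card : ℝ) - 1 ≤ ∑ w ∈ Finset.univ.filter (fun w => G.Adj y w), ((G.dist x w : ℝ) - 1) := by
  have hxT : x ∉ T := fun h => by simpa using (hT x h).2
  have : ∑ w ∈ insert x T, ((G.dist x w : ℝ) - 1) ≤
      ∑ w ∈ Finset.univ.filter (fun w => G.Adj y w), ((G.dist x w : ℝ) - 1) := by
    apply Finset.sum_le_sum_of_subset_of_nonneg
    · intro w hw
      rcases Finset.mem_insert.1 hw with rfl | hw
      · simp [hxy.symm]
      · simp [(hT w hw).1]
    · intro w _ hw
      have hne : x ≠ w := by rintro rfl; simp at hw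
      have : 0 < G.dist x w := hconn.pos_dist_of_ne hne
      have : (1:ℝ) ≤ G.dist x w := by exact_mod_cast this
      linarith
  rw [Finset.sum_insert hxT] at this
  have e : ∑ w ∈ T, ((G.dist x w : ℝ) - 1) = T.card := by
    rw [Finset.sum_congr rfl (fun w hw => by rw [(hT w hw).2])]
    norm_num
  rw [e] at this
  simp only [SimpleGraph.dist_self, Nat.cast_zero] at this
  linarith

lemma nbr_sub {V : Type*} [Fintype V] (G : SimpleGraph V) (hconn : G.Connected)
    (hk : ∀ x y, G.Adj x y → 1 ≤ kappaLLY G x y)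
    {x z w : V} (hxz : G.dist x z = 2) (hw : G.Adj z w) : G.Adj x w := by
  obtain ⟨y, hxy, hyz⟩ := exists_common G hconn hxz
  have h1 := (hk x y hxy).trans (dist_edge_le G hconn hxy)
  have hd : (G.dist x y : ℝ) = 1 := by
    rw [SimpleGraph.dist_eq_one_iff_adj.2 hxy]; simp
  have h2 := (hk y z hyz).trans (LLY_le G hconn hyz (fun w => (G.dist x w : ℝ))
    (dist_lip G hconn x) (by simp only [hd, hxz]; norm_num))
  have h3 := avg_sub G hw (fun w => (G.dist x w : ℝ))
  have hz := deg_pos' G hw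
  have h4 : (∑ w ∈ Finset.univ.filter (fun w => G.Adj z w), ((G.dist x w : ℝ) - 1)) / (deg G z : ℝ)
    ≤ 0 := by linarith
  rw [div_le_iff₀ hz, zero_mul] at h4
  have hnn : ∀ v ∈ Finset.univ.filter (fun w => G.Adj z w), (0:ℝ) ≤ (G.dist x v : ℝ) - 1 := by
    intro v hv
    have hv' : G.Adj z v := by simpa using hv
    have hne : x ≠ v := by
      rintro rfl
      rw [SimpleGraph.dist_comm, SimpleGraph.dist_eq_one_iff_adj.2 hv'] at hxz
      omega
    have : 0 < G.dist x v := hconn.pos_dist_of_ne hne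
    have : (1:ℝ) ≤ G.dist x v := by exact_mod_cast this
    linarith
  have h5 := Finset.single_le_sum hnn (a := w) (by simpa using hw)
  have h6 := hnn w (by simpa using hw)
  have h7 : (G.dist x w : ℝ) = 1 := by linarith
  exact SimpleGraph.dist_eq_one_iff_adj.1 (by exact_mod_cast h7)

lemma dist_two {V : Type*} [Fintype V] (G : SimpleGraph V) (hconn : G.Connected)
    (hdiam : diam G = 2) {x y : V} (hne : x ≠ y) (h : ¬ G.Adj x y) : G.dist x y = 2 := by
  have h1 : G.dist x y ≤ 2 := by
    rw [← hdiam]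
    exact Finset.le_sup (f := fun xy : V × V => G.dist xy.1 xy.2) (Finset.mem_univ (x, y))
  have h2 : 0 < G.dist x y := hconn.pos_dist_of_ne hne
  have h3 : G.dist x y ≠ 1 := fun e => h (SimpleGraph.dist_eq_one_iff_adj.1 e)
  omega

/-- A graph of diameter 2 is Bonnet-Myers sharp iff it can be obtained from the
complete graph on its vertices by deleting a matching. -/
theorem stmt0 {V : Type*} [Fintype V] (G : SimpleGraph V) (hconn : G.Connected)
    (hdiam : diam G = 2) :
    BMSharp G ↔ IsMatchingDeletionOfComplete G := by
  have hbdd : BddBelow {r : ℝ | ∃ x y, G.Adj x y ∧ r = kappaLLY G x y} := by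
    apply Set.Finite.bddBelow
    apply (Set.finite_range (fun xy : V × V => kappaLLY G xy.1 xy.2)).subset
    rintro _ ⟨x, y, -, rfl⟩
    exact ⟨(x, y), rfl⟩
  unfold BMSharp
  rw [hdiam]
  norm_num
  constructor
  · intro hs
    have hk : ∀ x y, G.Adj x y → 1 ≤ kappaLLY G x y := by
      intro x y h
      rw [← hs]
      exact csInf_le hbdd ⟨x, y, h, rfl⟩
    refine ⟨fun x y => x ≠ y ∧ ¬ G.Adj x y, fun x y h => ⟨h.1.symm, fun h' => h.2 h'.symm⟩,
      fun x h => h.1 rfl, ?_, ?_⟩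
    · rintro x z z' ⟨h1, h2⟩ ⟨h3, h4⟩
      by_contra hne
      have d1 := dist_two G hconn hdiam h1 h2
      have d2 := dist_two G hconn hdiam h3 h4
      obtain ⟨y, hxy, hyz⟩ := exists_common G hconn d1
      have hz' : G.Adj z' y := nbr_sub G hconn hk (by rw [SimpleGraph.dist_comm]; exact d2) hxy
      have h5 := sum_ge G hconn hxy {z, z'} (by
        intro w hw
        rcases Finset.mem_insert.1 hw with rfl | hw
        · exact ⟨hyz, d1⟩
        · rw [Finset.mem_singleton] at hw
          subst hw
          exact ⟨hz'.symm, d2⟩)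
      rw [Finset.card_pair hne] at h5
      have h6 := (hk x y hxy).trans (dist_edge_le G hconn hxy)
      rw [avg_sub G hyz] at h6
      have hy := deg_pos' G hyz
      have h7 : (∑ w ∈ Finset.univ.filter (fun w => G.Adj y w), ((G.dist x w : ℝ) - 1)) /
        (deg G y : ℝ) ≤ 0 := by linarith
      rw [div_le_iff₀ hy, zero_mul] at h7
      push_cast at h5
      linarith
    · intro x y
      constructor
      · exact fun h => ⟨h.ne, fun h' => h'.2 h⟩
      · rintro ⟨h1, h2⟩
        by_contra h
        exact h2 ⟨h1, h⟩
  · rintro ⟨M, hsym, hirr, huniq, hadj⟩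
    have hM : ∀ x y z, x ≠ y → ¬ G.Adj x y → x ≠ z → ¬ G.Adj x z → y = z := by
      intro x y z h1 h2 h3 h4
      rw [hadj] at h2 h4
      push Not at h2 h4
      exact huniq x y z (h2 h1) (h4 h3)
    obtain ⟨x, z, hxz⟩ : ∃ x z, G.dist x z = 2 := by
      have := hconn.nonempty
      obtain ⟨⟨x, z⟩, -, h⟩ := Finset.exists_mem_eq_sup (Finset.univ : Finset (V × V))
        Finset.univ_nonempty (fun xy : V × V => G.dist xy.1 xy.2)
      exact ⟨x, z, h.symm.trans hdiam⟩
    obtain ⟨y, hxy, hyz⟩ := exists_common G hconn hxz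
    apply le_antisymm
    · refine (csInf_le hbdd ⟨x, y, hxy, rfl⟩).trans ?_
      refine (dist_edge_le G hconn hxy).trans ?_
      rw [avg_sub G hyz]
      have h5 := sum_ge G hconn hxy {z} (by
        intro w hw
        rw [Finset.mem_singleton] at hw
        subst hw
        exact ⟨hyz, hxz⟩)
      simp only [Finset.card_singleton, Nat.cast_one, sub_self] at h5
      have := div_nonneg h5 (deg_pos' G hyz).le
      linarith
    · refine le_csInf ⟨_, x, y, hxy, rfl⟩ ?_
      rintro _ ⟨u, v, huv, rfl⟩
      exact one_le_LLY G hconn hM huv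
end
end

section
/- Let a≥2 and b≥1 be integers and G=G(a,b). For all 1≤i<j≤2a such that u_i and u_j are adjacent in G (i.e., {i,j} is not a pair {2k−1,2k} for any k), the Lin–Lu–Yau curvature satisfies κ_LLY(u_i,u_j)=1. -/
open scoped Classical
open Finset

noncomputable section

theorem W1_aux {V : Type*} [Fintype V] (G : SimpleGraph V) (x y x' y' : V) (p q : ℝ)
    (hq0 : 0 ≤ q) (hqp : q ≤ p) (hp1 : p ≤ 1)
    (hxy : x ≠ y) (hxx : x ≠ x') (hyy : y ≠ y') (hxy' : x ≠ y') (hyx' : y ≠ x') (hxy'' : x' ≠ y')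
    (μ₁ μ₂ : V → ℝ)
    (h1 : ∀ z, μ₁ z = if z = x then p else if z ≠ x' then q else 0)
    (h2 : ∀ z, μ₂ z = if z = y then p else if z ≠ y' then q else 0)
    (hd : ∀ z w, z ≠ w → 1 ≤ G.dist z w) (d1 : G.dist x y = 1) (d2 : G.dist y' x' = 1) :
    W1 G μ₁ μ₂ = p := by
  have lower : ∀ π : V → V → ℝ, (∀ x y, 0 ≤ π x y ∧ π x y ≤ 1) →
    (∀ x, ∑ y, π x y = μ₁ x) → (∀ y, ∑ x, π x y = μ₂ y) →
    p ≤ ∑ x, ∑ y, (G.dist x y : ℝ) * π x y := by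
    intro π hπ e1 e2
    let f : V → ℝ := fun z => (if z = x then 1 else 0) + (if z = y' then 1 else 0)
    have hf : ∀ z w, f z - f w ≤ (G.dist z w : ℝ) := by
      intro z w
      by_cases hzw : z = w
      · subst hzw; simp
      · have : (1:ℝ) ≤ G.dist z w := by exact_mod_cast hd z w hzw
        have a1 : f z ≤ 1 := by
          simp only [f]
          by_cases hz : z = x
          · subst hz; simp [hxy']
          · simp only [hz, if_false]; split_ifs <;> norm_num
        have a2 : 0 ≤ f w := by simp only [f]; positivity
        linarith
    have key : ∑ z, ∑ w, (f z - f w) * π z w = p := by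
      have e3 : ∑ z, ∑ w, (f z - f w) * π z w = ∑ z, f z * μ₁ z - ∑ w, f w * μ₂ w := by
        simp only [sub_mul, Finset.sum_sub_distrib]
        congr 1
        · simp only [← Finset.mul_sum, e1]
        · rw [Finset.sum_comm]
          simp only [← Finset.mul_sum, e2]
      rw [e3]
      simp only [f, add_mul, Finset.sum_add_distrib, ite_mul, one_mul, zero_mul,
        Finset.sum_ite_eq', Finset.sum_ite_eq, Finset.mem_univ, if_true, h1, h2]
      simp [hxy, hxy', hxy'.symm, hxy''.symm, hyy.symm]
    rw [← key]
    exact Finset.sum_le_sum fun z _ => Finset.sum_le_sum fun w _ =>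
      mul_le_mul_of_nonneg_right (hf z w) (hπ z w).1
  refine IsLeast.csInf_eq ⟨?_, ?_⟩
  rotate_left
  · rintro c ⟨π, hπ, e1, e2, rfl⟩
    exact lower π hπ e1 e2
  · · let m : V → ℝ := fun z => if z = x' then 0 else if z = y' then 0 else q
      have hm : ∀ z, 0 ≤ m z := by intro z; simp only [m]; split_ifs <;> simp [hq0]
      let π : V → V → ℝ := fun z w => (if z = w then m z else 0)
        + (if z = x then (if w = y then p - q else 0) else 0)
        + (if z = y' then (if w = x' then q else 0) else 0)
      have e1 : ∀ z, ∑ w, π z w = μ₁ z := by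
        intro z
        have : ∑ w, π z w = m z + (if z = x then p - q else 0) + (if z = y' then q else 0) := by
          simp only [π, Finset.sum_add_distrib]
          congr 1
          · congr 1
            · simp
            · split_ifs <;> simp
          · split_ifs <;> simp
        rw [this, h1]
        simp only [m]
        by_cases c1 : z = x
        · subst c1; simp [hxx, hxy']
        by_cases c2 : z = x'
        · subst c2; simp [c1, hxy'']
        by_cases c3 : z = y'
        · subst c3; simp [c1, c2]
        simp [c1, c2, c3]
      have e2 : ∀ w, ∑ z, π z w = μ₂ w := by
        intro w
        have : ∑ z, π z w = m w + (if w = y then p - q else 0) + (if w = x' then q else 0) := by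
          simp only [π, Finset.sum_add_distrib]
          simp
        rw [this, h2]
        simp only [m]
        by_cases c1 : w = y
        · subst c1; simp [hyx', hyy]
        by_cases c2 : w = x'
        · subst c2; simp [c1, hxy'']
        by_cases c3 : w = y'
        · subst c3; simp [c1, c2]
        simp [c1, c2, c3]
      have n0 : ∀ z w, 0 ≤ π z w := by
        intro z w
        have := hm z
        have : 0 ≤ p - q := by linarith
        simp only [π]
        positivity
      refine ⟨π, fun z w => ⟨n0 z w, ?_⟩, e1, e2, ?_⟩
      · have : π z w ≤ ∑ w, π z w :=
          Finset.single_le_sum (f := fun w => π z w) (fun w _ => n0 z w) (Finset.mem_univ w)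
        rw [e1, h1] at this
        refine this.trans ?_
        split_ifs <;> linarith
      · simp [π, mul_add, Finset.sum_add_distrib, d1, d2]

theorem deg_aux {V : Type*} [Fintype V] (G : SimpleGraph V) (x x' : V) (hxx : x ≠ x')
    (h : ∀ z, G.Adj x z ↔ z ≠ x ∧ z ≠ x') : deg G x = Fintype.card V - 2 := by
  have : (Finset.univ.filter (fun y => G.Adj x y)) = Finset.univ \ {x, x'} := by
    ext z; simp [h]
  rw [deg, this, Finset.card_sdiff_of_subset (Finset.subset_univ _), Finset.card_pair hxx,
    Finset.card_univ]

theorem LLY_aux {V : Type*} [Fintype V] (G : SimpleGraph V) (x y x' y' : V)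
    (hxy : x ≠ y) (hxx : x ≠ x') (hyy : y ≠ y') (hxy' : x ≠ y') (hyx' : y ≠ x') (hxy'' : x' ≠ y')
    (h1 : ∀ z, G.Adj x z ↔ z ≠ x ∧ z ≠ x') (h2 : ∀ z, G.Adj y z ↔ z ≠ y ∧ z ≠ y')
    (hc : 3 ≤ Fintype.card V)
    (hd : ∀ z w, z ≠ w → 1 ≤ G.dist z w) (d1 : G.dist x y = 1) (d2 : G.dist y' x' = 1) :
    kappaLLY G x y = 1 := by
  apply Filter.Tendsto.limUnder_eq
  refine tendsto_const_nhds.congr' ?_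
  have hev : Set.Ico (1/2:ℝ) 1 ∈ nhdsWithin (1:ℝ) (Set.Iio 1) :=
    Ico_mem_nhdsLT (by norm_num)
  filter_upwards [hev] with p hp
  have dx := deg_aux G x x' hxx h1
  have dy := deg_aux G y y' hyy h2
  have hD : (1:ℝ) ≤ ((Fintype.card V - 2 : ℕ) : ℝ) := by
    have : 1 ≤ Fintype.card V - 2 := by omega
    exact_mod_cast this
  have hp0 : 0 < 1 - p := by linarith [hp.2]
  have hW := W1_aux G x y x' y' p ((1 - p) / ((Fintype.card V - 2 : ℕ) : ℝ)) (by positivity)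
    ((div_le_self hp0.le hD).trans (by linarith [hp.1])) hp.2.le hxy hxx hyy hxy' hyx' hxy''
    (mu G p x) (mu G p y)
    (by intro z; simp only [mu, h1, dx]; split_ifs <;> simp_all)
    (by intro z; simp only [mu, h2, dy]; split_ifs <;> simp_all) hd d1 d2
  rw [kappa, hW, div_self hp0.ne']

/-- In `G(a,b)` with `a ≥ 2`, `b ≥ 1`, every edge `u_i ∼ u_j` has `κ_LLY = 1`. -/
theorem stmt1 (a b : ℕ) (ha : 2 ≤ a) (hb : 1 ≤ b) (i j : ℕ)
    (hi : 1 ≤ i) (hij : i < j) (hj : j ≤ 2*a)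
    (hadj : (Gab a b).Adj ⟨i-1, by omega⟩ ⟨j-1, by omega⟩) :
    kappaLLY (Gab a b) ⟨i-1, by omega⟩ ⟨j-1, by omega⟩ = 1 := by
  obtain ⟨hne, hpair⟩ := id hadj
  simp only [ne_eq, Fin.mk.injEq] at hne
  simp only at hpair
  set k := i - 1 with hk
  set l := j - 1 with hl
  have hk2 : k < 2*a := by omega
  have hl2 : l < 2*a := by omega
  have hkl : k / 2 ≠ l / 2 := fun h => hpair ⟨hk2, hl2, h⟩
  have hdist : ∀ z w : Fin (2*a+b), z ≠ w → 1 ≤ (Gab a b).dist z w := by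
    have hv : ∀ z : Fin (2*a+b), (Gab a b).Reachable z ⟨2*a, by omega⟩ := by
      intro z
      by_cases hz : z = ⟨2*a, by omega⟩
      · rw [hz]
      · exact SimpleGraph.Adj.reachable ⟨hz, fun h => by simp at h⟩
    intro z w hzw
    exact ((hv z).trans (hv w).symm).pos_dist_of_ne hzw
  refine LLY_aux (Gab a b) _ _ ⟨4 * (k / 2) + 1 - k, by omega⟩ ⟨4 * (l / 2) + 1 - l, by omega⟩
    ?_ ?_ ?_ ?_ ?_ ?_ ?_ ?_ ?_ hdist ?_ ?_
  · simpa using hne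
  · simp only [ne_eq, Fin.mk.injEq]; omega
  · simp only [ne_eq, Fin.mk.injEq]; omega
  · simp only [ne_eq, Fin.mk.injEq]; omega
  · simp only [ne_eq, Fin.mk.injEq]; omega
  · simp only [ne_eq, Fin.mk.injEq]; omega
  · intro z
    simp only [Gab, ne_eq, Fin.ext_iff]; omega
  · intro z
    simp only [Gab, ne_eq, Fin.ext_iff]; omega
  · simp only [Fintype.card_fin]; omega
  · exact SimpleGraph.dist_eq_one_iff_adj.2 hadj
  · refine SimpleGraph.dist_eq_one_iff_adj.2 ?_
    simp only [Gab, ne_eq, Fin.ext_iff]; omega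
end
end

section
/- Let a≥1 and b≥1 be integers and G=G(a,b). For all 1≤i≤2a and 1≤j≤b, the Lin–Lu–Yau curvature satisfies κ_LLY(u_i,v_j)=1. -/
open scoped Classical
open Finset

noncomputable section

section Helper
variable {V : Type*} [Fintype V] (G : SimpleGraph V) (x x' y : V)

def dl (z w : V) : ℝ := if z = w then 1 else 0

lemma dl_sum (w : V) (f : V → ℝ) : ∑ z, f z * dl z w = f w := by
  simp [dl]

lemma dl_t1 (z w v : V) : 0 ≤ dl z w - dl z v * dl w v := by
  unfold dl; split_ifs <;> simp_all

lemma dl_t2 (z v w : V) (h : v ≠ w) : 0 ≤ 1 - dl z v - dl z w := by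
  unfold dl; split_ifs <;> simp_all

lemma dl_t3 (z w v : V) (h : ¬ z = w) : dl z v * dl w v = 0 := by
  unfold dl; split_ifs <;> simp_all

lemma helper_deg_x (hxx : x ≠ x') (hx : ∀ z, G.Adj x z ↔ z ≠ x ∧ z ≠ x') :
    (deg G x : ℝ) = (Fintype.card V : ℝ) - 2 := by
  have h : (Finset.univ.filter (fun z => G.Adj x z)) = Finset.univ \ {x, x'} := by
    ext z; simp [hx]
  have h2 : ((Finset.univ : Finset V) \ {x, x'}).card + ({x, x'} : Finset V).card
      = Fintype.card V := by
    rw [Finset.card_sdiff_add_card_eq_card (Finset.subset_univ _), Finset.card_univ]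
  rw [Finset.card_pair hxx] at h2
  unfold deg
  rw [h, ← h2]; push_cast; ring

lemma helper_deg_y (hy : ∀ z, G.Adj y z ↔ z ≠ y) :
    (deg G y : ℝ) = (Fintype.card V : ℝ) - 1 := by
  have h : (Finset.univ.filter (fun z => G.Adj y z)) = Finset.univ \ {y} := by
    ext z; simp [hy]
  have h2 : ((Finset.univ : Finset V) \ {y}).card + ({y} : Finset V).card
      = Fintype.card V := by
    rw [Finset.card_sdiff_add_card_eq_card (Finset.subset_univ _), Finset.card_univ]
  rw [Finset.card_singleton] at h2
  unfold deg
  rw [h, ← h2]; push_cast; ring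

set_option maxHeartbeats 1000000 in
lemma helper_W1 (hxx : x ≠ x') (hxy : x ≠ y) (hxy' : x' ≠ y)
    (hx : ∀ z, G.Adj x z ↔ z ≠ x ∧ z ≠ x') (hx' : ∀ z, G.Adj x' z ↔ z ≠ x ∧ z ≠ x')
    (hy : ∀ z, G.Adj y z ↔ z ≠ y) (p : ℝ) (hp : 1/2 ≤ p) (hp1 : p < 1) :
    W1 G (mu G p x) (mu G p y) = p := by
  have hcard : 3 ≤ Fintype.card V := by
    have := Finset.card_le_univ ({x, x', y} : Finset V)
    rwa [Finset.card_eq_three.2 ⟨x, x', y, hxx, hxy, hxy', rfl⟩] at this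
  have hdx := helper_deg_x G x x' hxx hx
  have hdy := helper_deg_y G y hy
  obtain ⟨n, hn⟩ : ∃ n : ℝ, n = (Fintype.card V : ℝ) := ⟨_, rfl⟩
  have hn3 : 3 ≤ n := by rw [hn]; exact_mod_cast hcard
  rw [← hn] at hdx hdy
  obtain ⟨e, he⟩ : ∃ e, e = (1 - p) / ((n - 1) * (n - 2)) := ⟨_, rfl⟩
  have hn1 : n - 1 ≠ 0 := by linarith
  have hn2 : n - 2 ≠ 0 := by linarith
  have e1 : (1 - p) / (n - 1) = e * (n - 2) := by rw [he]; field_simp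
  have e2 : (1 - p) / (n - 2) = e * (n - 1) := by rw [he]; field_simp
  have e0 : 0 ≤ e := by
    rw [he]; apply div_nonneg; linarith; apply mul_nonneg <;> linarith
  have e3 : e * (n - 1) ≤ 1 / 2 := by
    rw [← e2, div_le_iff₀ (by linarith)]; nlinarith
  -- distances
  have adj1 : ∀ z w, G.Adj z w → G.dist z w = 1 := fun z w h => SimpleGraph.dist_eq_one_iff_adj.2 h
  have hxy1 : G.dist x y = 1 := adj1 _ _ ((hx y).2 ⟨hxy.symm, hxy'.symm⟩)
  have hyx'1 : G.dist y x' = 1 := adj1 _ _ ((hy x').2 hxy')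
  have conn : G.Connected := by
    have : ∀ z, G.Reachable y z := by
      intro z
      by_cases h : z = y
      · rw [h]
      · exact ((hy z).2 h).reachable
    exact { preconnected := fun z w => (this z).symm.trans (this w), nonempty := ⟨x⟩ }
  have hpos : ∀ z w, z ≠ w → 1 ≤ G.dist z w := fun z w h => conn.pos_dist_of_ne h
  have hxx'2 : G.dist x x' = 2 := by
    have h1 : G.dist x x' ≤ 2 := by
      have := conn.dist_triangle (u := x) (v := y) (w := x'); omega
    have h2 := hpos x x' hxx
    have h3 : G.dist x x' ≠ 1 := by
      intro h; exact ((hx x').1 (SimpleGraph.dist_eq_one_iff_adj.1 h)).2 rfl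
    omega
  have hzx' : ∀ z, (G.dist z x' : ℝ) = 1 + dl z x - dl z x' := by
    intro z
    by_cases h1 : z = x
    · subst h1; rw [hxx'2]; simp [dl, hxx]; norm_num
    by_cases h2 : z = x'
    · subst h2; simp [dl, h1]
    · rw [adj1 z x' ((hx' z).2 ⟨h1, h2⟩).symm]; simp [dl, h1, h2]
  have hmx : ∀ z, mu G p x z = dl z x * p + (1 - dl z x - dl z x') * (e * (n - 1)) := by
    intro z
    unfold mu dl
    rw [hdx, e2]
    by_cases h1 : z = x
    · subst h1; simp [hxx]
    by_cases h2 : z = x' <;> simp [hx, h1, h2, hxx.symm]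
  have hmy : ∀ z, mu G p y z = dl z y * p + (1 - dl z y) * (e * (n - 2)) := by
    intro z
    unfold mu dl
    rw [hdy, e1]
    by_cases h1 : z = y <;> simp [hy, h1]
  have dlx : dl x x = 1 := by simp [dl]
  have dlx' : dl x' x' = 1 := by simp [dl]
  have dly : dl y y = 1 := by simp [dl]
  have d1 : dl x x' = 0 := by simp [dl, hxx]
  have d2 : dl x' x = 0 := by simp [dl, hxx.symm]
  have d3 : dl x y = 0 := by simp [dl, hxy]
  have d4 : dl x' y = 0 := by simp [dl, hxy']
  have d5 : dl y x = 0 := by simp [dl, hxy.symm]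
  have d6 : dl y x' = 0 := by simp [dl, hxy'.symm]
  have dsymm : ∀ z w : V, dl z w = dl w z := by intro z w; simp [dl, eq_comm]
  have dsum : ∀ w : V, ∑ z, dl z w = 1 := by intro w; simp [dl]
  have dsum' : ∀ w : V, ∑ z, dl w z = 1 := by intro w; simp [dl]
  have ones : ∑ _z : V, (1:ℝ) = n := by simp [hn]
  -- lower bound
  have lower : ∀ c ∈ {c : ℝ | ∃ π : V → V → ℝ,
    (∀ x y, 0 ≤ π x y ∧ π x y ≤ 1) ∧
    (∀ z, ∑ w, π z w = mu G p x z) ∧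
    (∀ w, ∑ z, π z w = mu G p y w) ∧
    c = ∑ x, ∑ y, (G.dist x y : ℝ) * π x y}, p ≤ c := by
    rintro c ⟨π, h0, hr, hc, rfl⟩
    have lip : ∀ z w, (dl z x - dl z x') - (dl w x - dl w x') ≤ (G.dist z w : ℝ) := by
      intro z w
      by_cases h : z = w
      · subst h; simp
      have hp1 : (1:ℝ) ≤ G.dist z w := by exact_mod_cast hpos z w h
      by_cases h1 : z = x
      · by_cases h2 : w = x'
        · subst h1 h2; rw [hxx'2, dlx, dlx', d1, d2]; norm_num
        · have : dl w x' = 0 := by simp [dl, h2]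
          have hh : dl w x = 0 := by rw [h1] at h; simp [dl, Ne.symm h]
          rw [h1, dlx, d1, this, hh, ← h1]; linarith
      · have g1 : dl z x = 0 := by simp [dl, h1]
        have g2 : 0 ≤ dl z x' := by unfold dl; split_ifs <;> norm_num
        have g3 : 0 ≤ dl w x := by unfold dl; split_ifs <;> norm_num
        have g4 : dl w x' ≤ 1 := by unfold dl; split_ifs <;> norm_num
        linarith
    calc p = ∑ z, (dl z x - dl z x') * mu G p x z - ∑ w, (dl w x - dl w x') * mu G p y w := by
            simp only [sub_mul, Finset.sum_sub_distrib, mul_comm (dl _ _) (mu _ _ _ _), dl_sum]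
            rw [hmx, hmx, hmy, hmy, dlx, dlx', d1, d2, d3, d4]; ring
      _ = ∑ z, ∑ w, ((dl z x - dl z x') - (dl w x - dl w x')) * π z w := by
            simp only [sub_mul _ _ (π _ _), Finset.sum_sub_distrib]
            simp only [← hr, ← hc, sub_mul, Finset.sum_sub_distrib, Finset.mul_sum]
            rw [Finset.sum_comm (f := fun z w => dl w x * π z w),
              Finset.sum_comm (f := fun z w => dl w x' * π z w)]
      _ ≤ _ := Finset.sum_le_sum fun z _ => Finset.sum_le_sum fun w _ =>
            mul_le_mul_of_nonneg_right (lip z w) (h0 z w).1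
  have mem : p ∈ {c : ℝ | ∃ π : V → V → ℝ,
    (∀ x y, 0 ≤ π x y ∧ π x y ≤ 1) ∧
    (∀ z, ∑ w, π z w = mu G p x z) ∧
    (∀ w, ∑ z, π z w = mu G p y w) ∧
    c = ∑ x, ∑ y, (G.dist x y : ℝ) * π x y} := by
    let π : V → V → ℝ := fun z w => (e * (n - 2)) * dl z w - (e * (n - 2)) * dl z x' * dl w x'
      + (e * (1 - dl z x' - dl z y)) * dl w x' + (e * dl z y) * dl w y
      + ((p - e * (n - 1)) * dl z x) * dl w y
    have hrow : ∀ z, ∑ w, π z w = mu G p x z := by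
      intro z
      simp only [π, Finset.sum_add_distrib, Finset.sum_sub_distrib, dl_sum, ← Finset.mul_sum,
        dsum, dsum', hmx]
      by_cases h1 : z = x
      · subst h1; rw [dlx, d1, d3]; ring
      · have : dl z x = 0 := by simp [dl, h1]
        rw [this]; ring
    have hcol : ∀ w, ∑ z, π z w = mu G p y w := by
      intro w
      simp only [π, Finset.sum_add_distrib, Finset.sum_sub_distrib, ← Finset.mul_sum,
        ← Finset.sum_mul, dsum, ones, hmy]
      by_cases h1 : w = y
      · subst h1; rw [dly, d6]; ring
      · have : dl w y = 0 := by simp [dl, h1]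
        rw [this]; ring
    have hnn : ∀ z w, 0 ≤ π z w := by
      intro z w
      have k1 : 0 ≤ e * (n - 2) := mul_nonneg e0 (by linarith)
      have k2 : 0 ≤ p - e * (n - 1) := by linarith
      have t1 : 0 ≤ dl z w - dl z x' * dl w x' := dl_t1 z w x'
      have t2 : 0 ≤ 1 - dl z x' - dl z y := dl_t2 z x' y hxy'
      have t : ∀ z w : V, 0 ≤ dl z w := by
        intro z w; unfold dl; split_ifs <;> norm_num
      have q1 := mul_nonneg k1 t1
      have q2 := mul_nonneg (mul_nonneg e0 t2) (t w x')
      have q3 := mul_nonneg (mul_nonneg e0 (t z y)) (t w y)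
      have q4 := mul_nonneg (mul_nonneg k2 (t z x)) (t w y)
      simp only [π]; linarith
    refine ⟨π, fun z w => ⟨hnn z w, ?_⟩, hrow, hcol, ?_⟩
    · have h1 : π z w ≤ mu G p x z := by
        rw [← hrow]; exact Finset.single_le_sum (fun w _ => hnn z w) (Finset.mem_univ w)
      refine h1.trans ?_
      rw [hmx]
      have k2 : 0 ≤ e * (n - 1) := mul_nonneg e0 (by linarith)
      unfold dl; split_ifs <;> linarith
    · have key : ∀ z w, (G.dist z w : ℝ) * π z w =
          (G.dist z w * (e * (1 - dl z x' - dl z y))) * dl w x'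
          + (G.dist z w * ((p - e * (n - 1)) * dl z x)) * dl w y := by
        intro z w
        have z1 : (G.dist z w : ℝ) * dl z w = 0 := by
          by_cases h : z = w
          · subst h; simp
          · simp [dl, h]
        have z2 : ∀ v, (G.dist z w : ℝ) * (dl z v * dl w v) = 0 := by
          intro v
          by_cases h : z = w
          · subst h; simp
          · have : dl z v * dl w v = 0 := dl_t3 z w v h
            rw [this, mul_zero]
        simp only [π]
        linear_combination (e * (n - 2)) * z1 - (e * (n - 2)) * z2 x' + e * z2 y
      simp only [key, Finset.sum_add_distrib, dl_sum]
      have f1 : ∑ z, (G.dist z x' : ℝ) * (e * (1 - dl z x' - dl z y)) = e * (n - 1) := by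
        have : ∀ z, (G.dist z x' : ℝ) * (e * (1 - dl z x' - dl z y))
            = e * 1 + e * dl z x - e * dl z x' - (e * (1 + dl z x - dl z x')) * dl z y
              - (e * (1 + dl z x - dl z x')) * dl z x' := by
          intro z; rw [hzx']; ring
        simp only [this, Finset.sum_add_distrib, Finset.sum_sub_distrib, dl_sum,
          ← Finset.mul_sum, dsum, ones, d5, d6, d2, dlx']
        ring
      have f2 : ∑ z, (G.dist z y : ℝ) * ((p - e * (n - 1)) * dl z x) = p - e * (n - 1) := by
        simp only [← mul_assoc, dl_sum, hxy1]; simp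
      rw [f1, f2]; ring
  exact (IsLeast.csInf_eq ⟨mem, lower⟩)

lemma helper_LLY (hxx : x ≠ x') (hxy : x ≠ y) (hxy' : x' ≠ y)
    (hx : ∀ z, G.Adj x z ↔ z ≠ x ∧ z ≠ x') (hx' : ∀ z, G.Adj x' z ↔ z ≠ x ∧ z ≠ x')
    (hy : ∀ z, G.Adj y z ↔ z ≠ y) : kappaLLY G x y = 1 := by
  apply Filter.Tendsto.limUnder_eq
  refine (tendsto_const_nhds (x := (1:ℝ))).congr' ?_
  have h : Set.Ioo (1/2 : ℝ) 1 ∈ nhdsWithin (1:ℝ) (Set.Iio 1) :=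
    Ioo_mem_nhdsLT (by norm_num)
  filter_upwards [h] with p hp
  unfold kappa
  rw [helper_W1 G x x' y hxx hxy hxy' hx hx' hy p hp.1.le hp.2]
  rw [div_self]; linarith [hp.2]

end Helper

/-- In `G(a,b)` with `a, b ≥ 1`, every edge `u_i ∼ v_j` has `κ_LLY = 1`. -/
theorem stmt2 (a b : ℕ) (ha : 1 ≤ a) (hb : 1 ≤ b) (i j : ℕ)
    (hi1 : 1 ≤ i) (hi2 : i ≤ 2*a) (hj1 : 1 ≤ j) (hj2 : j ≤ b) :
    kappaLLY (Gab a b) ⟨i-1, by omega⟩ ⟨2*a+j-1, by omega⟩ = 1 := by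
  have hpl : (if (i - 1) % 2 = 0 then i else i - 2) < 2*a+b := by split_ifs <;> omega
  refine helper_LLY _ _ ⟨if (i - 1) % 2 = 0 then i else i - 2, hpl⟩ _ ?_ ?_ ?_ ?_ ?_ ?_
  · simp only [ne_eq, Fin.mk.injEq]; split_ifs <;> omega
  · simp only [ne_eq, Fin.mk.injEq]; omega
  · simp only [ne_eq, Fin.mk.injEq]; split_ifs <;> omega
  all_goals
    rintro ⟨z, hz⟩
    simp only [Gab, ne_eq, Fin.mk.injEq]
    try split_ifs
    all_goals omega
end
end
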